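/- arXiv:2411.12898 — 4 statements merged into one kernel-verified Lean document; each statement's English description precedes it below -/
import Mathlib

section
/- Let m ≥ 2, 1 ≤ k ≤ m, and let A be a real symmetric m×m matrix. Let Q be the random m×k matrix consisting of the first k columns of an m×m random orthogonal matrix distributed according to the Haar probability measure on the orthogonal group O(m). Then E[Q Qᵀ A Q Qᵀ] = (k/m)(1−β)·A + (tr A)·(k/m²)·β·I, where β = m(m−k)/((m+2)(m−1)) and I is the m×m identity matrix. -/
open Matrix MeasureTheory

/-- The first `k` columns of an `m × m` matrix (given as a function). -/
def firstCols {m : ℕ} (k : ℕ) (hkm : k ≤ m) (Q : Fin m → Fin m → ℝ) :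
    Matrix (Fin m) (Fin k) ℝ :=
  (Matrix.of Q).submatrix id (Fin.castLE hkm)

theorem exists_perm_pair {α : Type*} [DecidableEq α] (a b i j : α) (hab : a ≠ b) (hij : i ≠ j) :
    ∃ σ : Equiv.Perm α, σ a = i ∧ σ b = j := by
  refine ⟨Equiv.swap (Equiv.swap a i b) j * Equiv.swap a i, ?_, ?_⟩
  · rw [Equiv.Perm.mul_apply, Equiv.swap_apply_left]
    apply Equiv.swap_apply_of_ne_of_ne _ hij
    intro h
    have h2 : Equiv.swap a i a = Equiv.swap a i b := by rw [Equiv.swap_apply_left]; exact h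
    exact hab ((Equiv.swap a i).injective h2)
  · rw [Equiv.Perm.mul_apply, Equiv.swap_apply_left]

/-- Orthogonally invariant 4-tensors with the symmetries of `E[P ⊗ P]`. -/
theorem tensor_form (m : ℕ) (hm : 2 ≤ m) (κ : ℝ)
    (T : Fin m → Fin m → Fin m → Fin m → ℝ)
    (hU : ∀ U : Matrix (Fin m) (Fin m) ℝ, Uᵀ * U = 1 → ∀ i a b j,
      T i a b j = ∑ p, U i p * ∑ q, U a q * ∑ r, U b r * ∑ s, U j s * T p q r s)
    (hs1 : ∀ i a b j, T i a b j = T a i b j)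
    (hs2 : ∀ i a b j, T i a b j = T b j i a)
    (hk1 : ∑ i, ∑ a, T i a i a = κ)
    (hk2 : ∑ i, ∑ b, T i i b b = κ ^ 2)
    (A : Matrix (Fin m) (Fin m) ℝ) (hA : A.IsSymm) (i j : Fin m) :
    ∑ b, ∑ a, T i a b j * A a b =
      ((κ / m) * (1 - ((m : ℝ) * ((m : ℝ) - κ)) / (((m : ℝ) + 2) * ((m : ℝ) - 1)))) * A i j +
        ((Matrix.trace A) * (κ / (m : ℝ) ^ 2) *
          (((m : ℝ) * ((m : ℝ) - κ)) / (((m : ℝ) + 2) * ((m : ℝ) - 1)))) *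
          (1 : Matrix (Fin m) (Fin m) ℝ) i j := by
  -- signs
  have hsign : ∀ l i a b j, T i a b j =
      (if i = l then -1 else 1) * ((if a = l then -1 else 1) * ((if b = l then -1 else 1) *
        ((if j = l then -1 else 1) * T i a b j))) := by
    intro l i a b j
    have h := hU (Matrix.diagonal fun x => if x = l then -1 else 1) (by
      rw [Matrix.diagonal_transpose, Matrix.diagonal_mul_diagonal, ← Matrix.diagonal_one]
      congr 1; funext x; split_ifs <;> norm_num) i a b j
    simpa only [Matrix.diagonal_apply, ite_mul, zero_mul, Finset.sum_ite_eq, Finset.mem_univ,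
      if_true] using h
  have hperm : ∀ (σ : Equiv.Perm (Fin m)) i a b j, T i a b j = T (σ i) (σ a) (σ b) (σ j) := by
    intro σ i a b j
    have h := hU (Matrix.of fun x y => if σ x = y then 1 else 0) (by
      ext x y
      simp only [Matrix.mul_apply, Matrix.transpose_apply, Matrix.of_apply, Matrix.one_apply]
      rw [Finset.sum_eq_single (σ.symm x)]
      · simp
      · intro b _ hb
        rw [if_neg, zero_mul]
        rintro rfl; simp at hb
      · simp) i a b j
    simpa only [Matrix.of_apply, ite_mul, zero_mul, one_mul, Finset.sum_ite_eq, Finset.mem_univ,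
      if_true] using h
  have hz : ∀ l i a b j, ((if i = l then -1 else 1) * ((if a = l then -1 else 1) *
      ((if b = l then -1 else 1) * (if j = l then -1 else 1))) : ℝ) = -1 → T i a b j = 0 := by
    intro l i a b j h
    have h2 := hsign l i a b j
    have h3 : T i a b j = (-1) * T i a b j := by
      calc T i a b j = _ := h2
        _ = ((if i = l then -1 else 1) * ((if a = l then -1 else 1) *
              ((if b = l then -1 else 1) * (if j = l then -1 else 1)))) * T i a b j := by ring
        _ = _ := by rw [h]
    linarith
  have hrot : ∀ i j, i ≠ j → T i i i i = T i i j j + 2 * T i j i j := by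
    intro i j hij
    let w : Fin m → ℝ := fun x => if x = i then 2 else if x = j then 1 else 0
    let H : Matrix (Fin m) (Fin m) ℝ := 1 - (2/5 : ℝ) • Matrix.vecMulVec w w
    have hw : w ⬝ᵥ w = 5 := by
      have : ∀ x, w x * w x = (if x = i then 4 else 0) + (if x = j then 1 else 0) := by
        intro x; simp only [w]
        by_cases h1 : x = i
        · subst h1; simp [hij]; norm_num
        · by_cases h2 : x = j <;> simp [h1, h2, Ne.symm hij]
      simp only [dotProduct, this, Finset.sum_add_distrib]
      simp; norm_num
    have hH : Hᵀ * H = 1 := by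
      have ht : Hᵀ = H := by
        ext x y; simp [H, Matrix.vecMulVec_apply, Matrix.one_apply, eq_comm, mul_comm]
      have hvv : Matrix.vecMulVec w w * Matrix.vecMulVec w w = (5:ℝ) • Matrix.vecMulVec w w := by
        rw [Matrix.vecMulVec_mul_vecMulVec, hw]; ext x y; simp [Matrix.vecMulVec_apply]; try ring
      rw [ht]
      simp only [H, sub_mul, mul_sub, one_mul, mul_one, smul_mul_assoc, mul_smul_comm, hvv]
      ext x y; simp; ring
    have hrow : ∀ f : Fin m → ℝ, ∑ p, H i p * f p = (-3/5) * f i + (-4/5) * f j := by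
      intro f
      have : ∀ p, H i p * f p = (if p = i then (-3/5) * f i else 0) +
          (if p = j then (-4/5) * f j else 0) := by
        intro p
        simp only [H, w, Matrix.sub_apply, Matrix.one_apply, Matrix.smul_apply,
          Matrix.vecMulVec_apply, smul_eq_mul]
        by_cases h1 : p = i
        · subst h1; simp [hij]; left; norm_num
        · by_cases h2 : p = j
          · subst h2; simp [hij, Ne.symm hij]; ring
          · simp [h1, h2, Ne.symm h1]
      simp only [this, Finset.sum_add_distrib]
      simp
    have h := hU H hH i i i i
    simp only [hrow] at h
    have e1 : T j j j j = T i i i i := by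
      have := hperm (Equiv.swap i j) i i i i
      simpa using this.symm
    have e2 : T j j i i = T i i j j := hs2 _ _ _ _
    have e3 : T j i i j = T i j i j := hs1 _ _ _ _
    have e4 : T i j j i = T i j i j := by rw [hs2, e3]
    have e5 : T j i j i = T i j i j := by rw [hs1, e4]
    have hji := Ne.symm hij
    have z1 : T i i i j = 0 := hz i _ _ _ _ (by simp [hji])
    have z2 : T i i j i = 0 := hz i _ _ _ _ (by simp [hji])
    have z3 : T i j i i = 0 := hz i _ _ _ _ (by simp [hji])
    have z4 : T j i i i = 0 := hz i _ _ _ _ (by simp [hji])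
    have z5 : T i j j j = 0 := hz i _ _ _ _ (by simp [hji])
    have z6 : T j i j j = 0 := hz i _ _ _ _ (by simp [hji])
    have z7 : T j j i j = 0 := hz i _ _ _ _ (by simp [hji])
    have z8 : T j j j i = 0 := hz i _ _ _ _ (by simp [hji])
    rw [e1, e2, e3, e4, e5, z1, z2, z3, z4, z5, z6, z7, z8] at h
    linarith
  obtain ⟨e0, e1, h01⟩ : ∃ e0 e1 : Fin m, e0 ≠ e1 :=
    ⟨⟨0, by omega⟩, ⟨1, by omega⟩, by simp [Fin.ext_iff]⟩
  obtain ⟨y, hy⟩ : ∃ y, y = T e0 e0 e1 e1 := ⟨_, rfl⟩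
  obtain ⟨z, hzz⟩ : ∃ z, z = T e0 e1 e0 e1 := ⟨_, rfl⟩
  have Hy : ∀ i j, i ≠ j → T i i j j = y := by
    intro i j hij
    obtain ⟨σ, rfl, rfl⟩ := exists_perm_pair e0 e1 i j h01 hij
    rw [hy, ← hperm σ]
  have Hz : ∀ i j, i ≠ j → T i j i j = z := by
    intro i j hij
    obtain ⟨σ, rfl, rfl⟩ := exists_perm_pair e0 e1 i j h01 hij
    rw [hzz, ← hperm σ]
  have Hx : ∀ i, T i i i i = y + 2 * z := by
    intro i
    obtain ⟨j, hj⟩ : ∃ j, i ≠ j := by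
      by_cases h : i = e0
      · exact ⟨e1, h ▸ h01⟩
      · exact ⟨e0, h⟩
    rw [hrot i j hj, Hy i j hj, Hz i j hj]
  have q1 : ∀ i a, T i a i a = z + (if i = a then y + z else 0) := by
    intro i a
    split_ifs with h
    · subst h; rw [Hx]; ring
    · rw [Hz _ _ h]; ring
  have q2 : ∀ i a, T i i a a = y + (if i = a then 2 * z else 0) := by
    intro i a
    split_ifs with h
    · subst h; rw [Hx]
    · rw [Hy _ _ h]; ring
  simp only [q1, Finset.sum_add_distrib, Finset.sum_ite_eq, Finset.mem_univ, if_true,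
    Finset.sum_const, Finset.card_univ, Fintype.card_fin, nsmul_eq_mul] at hk1
  simp only [q2, Finset.sum_add_distrib, Finset.sum_ite_eq, Finset.mem_univ, if_true,
    Finset.sum_const, Finset.card_univ, Fintype.card_fin, nsmul_eq_mul] at hk2
  have hm' : (2:ℝ) ≤ m := by exact_mod_cast hm
  have hm0 : (m:ℝ) ≠ 0 := by positivity
  have hm1 : (m:ℝ) - 1 ≠ 0 := by intro h; linarith
  have hm2 : (m:ℝ) + 2 ≠ 0 := by positivity
  have vz : z = (κ / (m : ℝ) ^ 2) *
          (((m : ℝ) * ((m : ℝ) - κ)) / (((m : ℝ) + 2) * ((m : ℝ) - 1))) := by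
    field_simp
    linear_combination (m:ℝ) * hk1 - hk2
  have vyz : y + z = (κ / m) * (1 - ((m : ℝ) * ((m : ℝ) - κ)) / (((m : ℝ) + 2) * ((m : ℝ) - 1))) := by
    have : m * (y + z) + m ^ 2 * z = κ := by linarith
    have h2 : y + z = (κ - m ^ 2 * z) / m := by field_simp; linarith
    rw [h2, vz]; field_simp
  rw [mul_assoc (Matrix.trace A), ← vz, ← vyz]
  by_cases hij : i = j
  · subst hij
    have : ∀ b a, T i a b i * A a b =
        (if a = b then z * A b b else 0) + (if a = b then (if b = i then (y + z) * A i i else 0) else 0) := by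
      intro b a
      by_cases hab : a = b
      · subst hab
        simp only [if_true]
        rw [hs2, hs1, hs2, q1]
        by_cases h : a = i
        · subst h; simp; ring
        · simp [h, Ne.symm h]
      · have : T i a b i = 0 := by
          apply hz b
          by_cases h : i = b <;> simp [h, hab]
        simp [this, hab]
    simp only [this, Finset.sum_add_distrib, Finset.sum_ite_eq', Finset.mem_univ, if_true, Matrix.one_apply]
    rw [← Finset.mul_sum, Matrix.trace]
    simp only [Matrix.diag_apply]
    ring
  · have hji := Ne.symm hij
    have : ∀ b a, T i a b j * A a b =
        (if b = j then (if a = i then y * A i j else 0) else 0) +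
        (if b = i then (if a = j then z * A i j else 0) else 0) := by
      intro b a
      by_cases hai : a = i
      · subst hai
        by_cases hbj : b = j
        · subst hbj; rw [Hy _ _ hij]; simp [hij]
        · have : T a a b j = 0 := hz j _ _ _ _ (by simp [hij, hbj])
          simp [this, hbj, hij]
      · by_cases hbi : b = i
        · subst hbi
          by_cases haj : a = j
          · subst haj
            rw [Hz _ _ hij, ← hA.apply a b]; simp [hij]
          · have : T b a b j = 0 := hz j _ _ _ _ (by simp [hij, haj])
            simp [this, haj, hij]
        · have : T i a b j = 0 := hz i _ _ _ _ (by simp [hai, hbi, hji])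
          simp [this, hai, hbi]
    simp only [this, Finset.sum_add_distrib, Finset.sum_ite_eq', Finset.mem_univ, if_true]
    have e : ∀ (c : Prop) [Decidable c] (f : Fin m → ℝ), (∑ a, if c then f a else 0) = if c then ∑ a, f a else 0 := by
      intro c _ f; split_ifs <;> simp
    simp only [e, Finset.sum_ite_eq', Finset.mem_univ, if_true]
    rw [Matrix.one_apply_ne hij]
    ring

/-- For `Q` the first `k` columns of a Haar-distributed orthogonal matrix and `A`
symmetric, `E[Q Qᵀ A Q Qᵀ] = (k/m)(1−β)·A + (tr A)·(k/m²)·β·I` where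
`β = m(m−k)/((m+2)(m−1))`.  The Haar measure on `O(m)` is characterized as a probability
measure supported on the orthogonal matrices and invariant under left translation by any
orthogonal matrix. -/
theorem haar_k_expectation (m k : ℕ) (hm : 2 ≤ m) (hk : 1 ≤ k) (hkm : k ≤ m)
    (A : Matrix (Fin m) (Fin m) ℝ) (hA : A.IsSymm)
    (μ : Measure (Fin m → Fin m → ℝ)) [IsProbabilityMeasure μ]
    (hsupp : μ {Q | (Matrix.of Q)ᵀ * (Matrix.of Q) = 1} = 1)
    (hinv : ∀ U : Matrix (Fin m) (Fin m) ℝ, Uᵀ * U = 1 →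
      Measure.map (fun Q => Matrix.of.symm (U * Matrix.of Q)) μ = μ) :
    (Matrix.of fun i j => ∫ Q,
        ((firstCols k hkm Q) * (firstCols k hkm Q)ᵀ * A *
          ((firstCols k hkm Q) * (firstCols k hkm Q)ᵀ)) i j ∂μ) =
      (((k : ℝ) / m) * (1 - ((m : ℝ) * ((m : ℝ) - (k : ℝ))) / (((m : ℝ) + 2) * ((m : ℝ) - 1)))) • A +
        ((Matrix.trace A) * ((k : ℝ) / (m : ℝ) ^ 2) *
          (((m : ℝ) * ((m : ℝ) - (k : ℝ))) / (((m : ℝ) + 2) * ((m : ℝ) - 1)))) •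
          (1 : Matrix (Fin m) (Fin m) ℝ) := by
  let P : (Fin m → Fin m → ℝ) → Matrix (Fin m) (Fin m) ℝ := fun Q =>
    firstCols k hkm Q * (firstCols k hkm Q)ᵀ
  have hPdef : ∀ Q, P Q = firstCols k hkm Q * (firstCols k hkm Q)ᵀ := fun _ => rfl
  have hPij : ∀ Q i j, P Q i j = ∑ c : Fin k, Q i (Fin.castLE hkm c) * Q j (Fin.castLE hkm c) := by
    intro Q i j; simp [P, Matrix.mul_apply, firstCols]
  have hPc : ∀ i j, Continuous fun Q => P Q i j := by
    intro i j; simp only [hPij]; fun_prop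
  have hcl : IsClosed {Q : Fin m → Fin m → ℝ | (Matrix.of Q)ᵀ * (Matrix.of Q) = 1} := by
    apply isClosed_eq
    · refine continuous_matrix fun i j => ?_
      simp only [Matrix.mul_apply, Matrix.transpose_apply, Matrix.of_apply]; fun_prop
    · exact continuous_const
  have hae : ∀ᵐ Q ∂μ, (Matrix.of Q)ᵀ * (Matrix.of Q) = 1 :=
    (mem_ae_iff_prob_eq_one hcl.measurableSet).2 hsupp
  have hFF : ∀ Q : Fin m → Fin m → ℝ, (Matrix.of Q)ᵀ * (Matrix.of Q) = 1 →
      (firstCols k hkm Q)ᵀ * firstCols k hkm Q = 1 := by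
    intro Q hQ
    ext a b
    have := congrFun (congrFun hQ (Fin.castLE hkm a)) (Fin.castLE hkm b)
    simpa [Matrix.mul_apply, firstCols, Matrix.one_apply] using this
  have hPsymm : ∀ Q i j, P Q i j = P Q j i := by
    intro Q i j; simp only [hPij, mul_comm]
  have hQb : ∀ Q : Fin m → Fin m → ℝ, (Matrix.of Q)ᵀ * (Matrix.of Q) = 1 → ∀ i j, |Q i j| ≤ 1 := by
    intro Q hQ i j
    have h := congrFun (congrFun hQ j) j
    simp only [Matrix.mul_apply, Matrix.transpose_apply, Matrix.of_apply, Matrix.one_apply_eq] at h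
    have h2 := Finset.single_le_sum (f := fun x => Q x j * Q x j)
      (fun x _ => mul_self_nonneg _) (Finset.mem_univ i)
    rw [← sq_le_one_iff_abs_le_one]
    nlinarith
  have hPb : ∀ Q : Fin m → Fin m → ℝ, (Matrix.of Q)ᵀ * (Matrix.of Q) = 1 → ∀ i j, |P Q i j| ≤ k := by
    intro Q hQ i j
    rw [hPij]
    refine (Finset.abs_sum_le_sum_abs _ _).trans ?_
    calc _ ≤ ∑ c : Fin k, (1:ℝ) := by
          refine Finset.sum_le_sum fun c _ => ?_
          rw [abs_mul]
          exact mul_le_one₀ (hQb Q hQ _ _) (abs_nonneg _) (hQb Q hQ _ _)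
      _ = k := by simp
  have hPint : ∀ i a b j, Integrable (fun Q => P Q i a * P Q b j) μ := by
    intro i a b j
    refine Integrable.of_bound ((hPc i a).mul (hPc b j)).aestronglyMeasurable ((k:ℝ) * k) ?_
    filter_upwards [hae] with Q hQ
    rw [Real.norm_eq_abs, abs_mul]
    exact mul_le_mul (hPb Q hQ _ _) (hPb Q hQ _ _) (abs_nonneg _) (by positivity)
  have hPU : ∀ (U : Matrix (Fin m) (Fin m) ℝ) Q,
      P (Matrix.of.symm (U * Matrix.of Q)) = U * P Q * Uᵀ := by
    intro U Q
    have : firstCols k hkm (Matrix.of.symm (U * Matrix.of Q)) = U * firstCols k hkm Q := by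
      ext x y; simp [firstCols, Matrix.mul_apply]
    rw [hPdef, this, Matrix.transpose_mul, hPdef]; simp only [Matrix.mul_assoc]
  have hUe : ∀ (U : Matrix (Fin m) (Fin m) ℝ) Q i a,
      (U * P Q * Uᵀ) i a = ∑ p, U i p * ∑ q, U a q * P Q p q := by
    intro U Q i a
    rw [Matrix.mul_assoc]
    simp only [Matrix.mul_apply, Matrix.transpose_apply]
    refine Finset.sum_congr rfl fun p _ => ?_
    congr 1
    exact Finset.sum_congr rfl fun q _ => mul_comm _ _
  have key := tensor_form m hm (k:ℝ) (fun i a b j => ∫ Q, P Q i a * P Q b j ∂μ)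
    (by
      intro U hU i a b j
      have hm1 : Measurable (fun Q : Fin m → Fin m → ℝ => Matrix.of.symm (U * Matrix.of Q)) := by
        apply Continuous.measurable
        refine continuous_pi fun x => continuous_pi fun y => ?_
        simp only [Matrix.of_symm_apply, Matrix.mul_apply, Matrix.of_apply]; fun_prop
      have h1 : ∫ Q, P Q i a * P Q b j ∂μ =
          ∫ Q, (U * P Q * Uᵀ) i a * (U * P Q * Uᵀ) b j ∂μ := by
        conv_lhs => rw [← hinv U hU]
        have hc : Continuous fun Q => P Q i a * P Q b j := (hPc i a).mul (hPc b j)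
        rw [integral_map hm1.aemeasurable hc.aestronglyMeasurable]
        simp only [hPU]
      have h2 : ∀ Q, (U * P Q * Uᵀ) i a * (U * P Q * Uᵀ) b j =
          ∑ p, U i p * ∑ q, U a q * ∑ r, U b r * ∑ s, U j s * (P Q p q * P Q r s) := by
        intro Q
        rw [hUe, hUe, Finset.sum_mul]
        refine Finset.sum_congr rfl fun p _ => ?_
        rw [mul_assoc, Finset.sum_mul]
        congr 1
        refine Finset.sum_congr rfl fun q _ => ?_
        rw [mul_assoc, Finset.mul_sum]
        congr 1
        refine Finset.sum_congr rfl fun r _ => ?_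
        rw [mul_left_comm, Finset.mul_sum]
        congr 1
        refine Finset.sum_congr rfl fun s _ => ?_
        ring
      rw [h1]
      simp only [h2]
      have i1 : ∀ p q r s, Integrable (fun Q => U j s * (P Q p q * P Q r s)) μ :=
        fun p q r s => (hPint p q r s).const_mul _
      have i2 : ∀ p q r, Integrable (fun Q => U b r * ∑ s, U j s * (P Q p q * P Q r s)) μ :=
        fun p q r => (integrable_finsetSum _ fun s _ => i1 p q r s).const_mul _
      have i3 : ∀ p q, Integrable (fun Q => U a q * ∑ r, U b r * ∑ s, U j s * (P Q p q * P Q r s)) μ :=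
        fun p q => (integrable_finsetSum _ fun r _ => i2 p q r).const_mul _
      have i4 : ∀ p, Integrable (fun Q => U i p * ∑ q, U a q * ∑ r, U b r * ∑ s, U j s * (P Q p q * P Q r s)) μ :=
        fun p => (integrable_finsetSum _ fun q _ => i3 p q).const_mul _
      rw [integral_finsetSum _ fun p _ => i4 p]
      refine Finset.sum_congr rfl fun p _ => ?_
      rw [integral_const_mul, integral_finsetSum _ fun q _ => i3 p q]
      congr 1
      refine Finset.sum_congr rfl fun q _ => ?_
      rw [integral_const_mul, integral_finsetSum _ fun r _ => i2 p q r]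
      congr 1
      refine Finset.sum_congr rfl fun r _ => ?_
      rw [integral_const_mul, integral_finsetSum _ fun s _ => i1 p q r s]
      congr 1
      refine Finset.sum_congr rfl fun s _ => ?_
      rw [integral_const_mul])
    (by intro i a b j; simp only [hPsymm _ i a])
    (by intro i a b j; simp only [mul_comm])
    (by
      have : ∀ i, ∑ a, ∫ Q, P Q i a * P Q i a ∂μ = ∫ Q, ∑ a, P Q i a * P Q i a ∂μ :=
        fun i => (integral_finsetSum _ fun a _ => hPint _ _ _ _).symm
      simp only [this]
      rw [← integral_finsetSum _ fun i _ => integrable_finsetSum _ fun a _ => hPint _ _ _ _]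
      have h : ∀ᵐ Q ∂μ, ∑ i, ∑ a, P Q i a * P Q i a = (k:ℝ) := by
        filter_upwards [hae] with Q hQ
        have h1 : ∑ i, ∑ a, P Q i a * P Q i a = Matrix.trace (P Q * P Q) := by
          simp only [Matrix.trace, Matrix.diag_apply, Matrix.mul_apply]
          refine Finset.sum_congr rfl fun i _ => Finset.sum_congr rfl fun a _ => ?_
          rw [hPsymm Q a i]
        have h2 : P Q * P Q = P Q := by
          rw [hPdef, Matrix.mul_assoc, ← Matrix.mul_assoc _ (firstCols k hkm Q), hFF Q hQ,
            Matrix.one_mul]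
        rw [h1, h2, hPdef, Matrix.trace_mul_comm, hFF Q hQ]; simp
      rw [integral_congr_ae h]; simp)
    (by
      have : ∀ i, ∑ a, ∫ Q, P Q i i * P Q a a ∂μ = ∫ Q, ∑ a, P Q i i * P Q a a ∂μ :=
        fun i => (integral_finsetSum _ fun a _ => hPint _ _ _ _).symm
      simp only [this]
      rw [← integral_finsetSum _ fun i _ => integrable_finsetSum _ fun a _ => hPint _ _ _ _]
      have h : ∀ᵐ Q ∂μ, ∑ i, ∑ a, P Q i i * P Q a a = (k:ℝ) ^ 2 := by
        filter_upwards [hae] with Q hQ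
        have h1 : ∑ i, ∑ a, P Q i i * P Q a a = Matrix.trace (P Q) ^ 2 := by
          rw [sq, Matrix.trace, Finset.sum_mul_sum]; rfl
        rw [h1, hPdef, Matrix.trace_mul_comm, hFF Q hQ]; simp
      rw [integral_congr_ae h]; simp)
    A hA
  ext i j
  simp only [Matrix.of_apply, Matrix.add_apply, Matrix.smul_apply, smul_eq_mul]
  rw [← key i j]
  have h3 : ∀ Q, (firstCols k hkm Q * (firstCols k hkm Q)ᵀ * A *
          (firstCols k hkm Q * (firstCols k hkm Q)ᵀ)) i j =
      ∑ b, ∑ a, P Q i a * P Q b j * A a b := by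
    intro Q
    rw [← hPdef]
    simp only [Matrix.mul_apply (M := P Q * A), Matrix.mul_apply (M := P Q), Finset.sum_mul]
    refine Finset.sum_congr rfl fun b _ => Finset.sum_congr rfl fun a _ => ?_
    ring
  simp only [h3]
  rw [integral_finsetSum _ fun b _ => integrable_finsetSum _ fun a _ => (hPint i a b j).mul_const _]
  refine Finset.sum_congr rfl fun b _ => ?_
  rw [integral_finsetSum _ fun a _ => (hPint i a b j).mul_const _]
  refine Finset.sum_congr rfl fun a _ => ?_
  rw [integral_mul_const]
end

section
/- Let m ≥ 2, 1 ≤ k ≤ m, and let A be a real symmetric m×m matrix. Let the random m×k matrix Q be √(m/k) times the matrix of the first k columns of an m×m random orthogonal matrix distributed according to the Haar probability measure on O(m). Then ‖E[Q Qᵀ A Q Qᵀ]‖ = (m/k)·‖ (1−β)·A + β·(tr A/m)·I ‖, where β = m(m−k)/((m+2)(m−1)), I is the m×m identity matrix, and ‖·‖ denotes the operator norm. -/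
open Matrix MeasureTheory

/-- The operator norm on `m × m` real matrices induced by the Euclidean norm. -/
noncomputable def opNorm {m : ℕ} (A : Matrix (Fin m) (Fin m) ℝ) : ℝ :=
  ‖Matrix.toEuclideanCLM (𝕜 := ℝ) (n := Fin m) A‖

/-- `√(m/k)` times the first `k` columns of an `m × m` matrix (given as a function):
the haar-k compression matrix. -/
noncomputable def haarK {m : ℕ} (k : ℕ) (hkm : k ≤ m) (Q : Fin m → Fin m → ℝ) :
    Matrix (Fin m) (Fin k) ℝ :=
  Real.sqrt ((m : ℝ) / k) • (Matrix.of Q).submatrix id (Fin.castLE hkm)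


section helpers

variable {m : ℕ} {Ω : Type*} [MeasurableSpace Ω] {μ : Measure Ω} [IsProbabilityMeasure μ]
  {G : Ω → Matrix (Fin m) (Fin m) ℝ} {k : ℝ}

/-- Integrals of continuous functions of `G` are invariant under orthogonal conjugation. -/
def ConjInv (μ : Measure Ω) (G : Ω → Matrix (Fin m) (Fin m) ℝ) : Prop :=
  ∀ F : Matrix (Fin m) (Fin m) ℝ → ℝ, Continuous F →
    ∀ U : Matrix (Fin m) (Fin m) ℝ, Uᵀ * U = 1 → ∫ ω, F (U * G ω * Uᵀ) ∂μ = ∫ ω, F (G ω) ∂μ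

lemma inv_perm (hinv : ConjInv μ G) (F : Matrix (Fin m) (Fin m) ℝ → ℝ) (hF : Continuous F)
    (σ : Equiv.Perm (Fin m)) :
    ∫ ω, F ((G ω).submatrix σ σ) ∂μ = ∫ ω, F (G ω) ∂μ := by
  rw [← hinv F hF (σ.toPEquiv.toMatrix)]
  · congr 1; ext ω; congr 1
    rw [← PEquiv.toMatrix_symm, ← Equiv.toPEquiv_symm, PEquiv.toMatrix_toPEquiv_mul,
      PEquiv.mul_toMatrix_toPEquiv]
    ext a b; simp
  · rw [← PEquiv.toMatrix_symm, ← Equiv.toPEquiv_symm, PEquiv.toMatrix_toPEquiv_mul]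
    ext a b
    simp [PEquiv.toMatrix_apply, Equiv.toPEquiv, Matrix.one_apply, eq_comm]

lemma inv_sign (hinv : ConjInv μ G) (F : Matrix (Fin m) (Fin m) ℝ → ℝ) (hF : Continuous F)
    (i : Fin m) :
    ∫ ω, F (Matrix.of fun a b => (if a = i then -1 else 1) * G ω a b * (if b = i then -1 else 1)) ∂μ
      = ∫ ω, F (G ω) ∂μ := by
  rw [← hinv F hF (Matrix.diagonal fun a => if a = i then -1 else 1)]
  · congr 1; ext ω; congr 1
    ext a b
    simp [Matrix.diagonal_transpose, Matrix.mul_diagonal, Matrix.diagonal_mul]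
  · rw [Matrix.diagonal_transpose, Matrix.diagonal_mul_diagonal, ← Matrix.diagonal_one]
    congr 1; ext a; split_ifs <;> simp

lemma rot {m : ℕ} (i j : Fin m) (hij : i ≠ j) :
    ∃ U : Matrix (Fin m) (Fin m) ℝ, Uᵀ * U = 1 ∧
      ∀ X : Matrix (Fin m) (Fin m) ℝ, (U * X * Uᵀ) i j =
        12 / 25 * (X j j - X i i) + 16 / 25 * X j i - 9 / 25 * X i j := by
  let w : Fin m → ℝ := Pi.single i 1 + Pi.single j 2
  have hww : w ⬝ᵥ w = 5 := by
    simp [w, hij, hij.symm]; norm_num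
  let U : Matrix (Fin m) (Fin m) ℝ := 1 - (2 / 5 : ℝ) • vecMulVec w w
  have hUT : Uᵀ = U := by
    simp [U, Matrix.transpose_vecMulVec]
  refine ⟨U, ?_, ?_⟩
  · rw [hUT]
    simp only [U, sub_mul, mul_sub, Matrix.one_mul, Matrix.mul_one, Matrix.smul_mul, Matrix.mul_smul,
      Matrix.vecMulVec_mul_vecMulVec, hww, smul_smul, vecMulVec_smul]
    module
  · intro X
    have hi : U i = (3 / 5 : ℝ) • Pi.single i 1 - (4 / 5 : ℝ) • Pi.single j 1 := by
      ext a
      by_cases h1 : a = i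
      · subst h1; simp [U, w, vecMulVec_apply, hij, hij.symm]; norm_num
      · by_cases h2 : a = j
        · subst h2; simp [U, w, vecMulVec_apply, hij, hij.symm]; norm_num
        · simp [U, w, vecMulVec_apply, h1, h2, Ne.symm h1]
    have hj : U j = (-4 / 5 : ℝ) • Pi.single i 1 - (3 / 5 : ℝ) • Pi.single j 1 := by
      ext a
      by_cases h1 : a = i
      · subst h1; simp [U, w, vecMulVec_apply, hij, hij.symm]; norm_num
      · by_cases h2 : a = j
        · subst h2; simp [U, w, vecMulVec_apply, hij, hij.symm]; norm_num
        · simp [U, w, vecMulVec_apply, h1, h2, Ne.symm h2]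
    have : (U * X * Uᵀ) i j = (U i ᵥ* X) ⬝ᵥ U j := by
      simp [Matrix.mul_apply, dotProduct, vecMul]
    rw [this, hi, hj]
    simp [Matrix.sub_vecMul, Matrix.smul_vecMul, dotProduct_sub, sub_dotProduct]
    ring

/-- The moments of `G`. -/
lemma moments (hm : 2 ≤ m) (hinv : ConjInv μ G)
    (hint : ∀ F : Matrix (Fin m) (Fin m) ℝ → ℝ, Continuous F → Integrable (fun ω => F (G ω)) μ)
    (hsym : ∀ ω, (G ω)ᵀ = G ω) (hid : ∀ᵐ ω ∂μ, G ω * G ω = G ω)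
    (htr : ∀ᵐ ω ∂μ, (G ω).trace = k) (i : Fin m) :
    ∫ ω, G ω i i ^ 2 ∂μ = k * (k + 2) / (m * (m + 2)) ∧
    (∀ j, j ≠ i → ∫ ω, G ω i j ^ 2 ∂μ = (k / m - k * (k + 2) / (m * (m + 2))) / (m - 1)) ∧
    (∀ j a, j ≠ i → ∫ ω, G ω i a * G ω a j ∂μ = 0) := by
  have hm0 : (m : ℝ) ≠ 0 := by positivity
  have hm1 : (m : ℝ) - 1 ≠ 0 := by
    have : (2 : ℝ) ≤ m := by exact_mod_cast hm
    linarith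
  have hs : ∀ ω a b, G ω a b = G ω b a := fun ω a b => congrFun (congrFun (hsym ω) b) a
  have hcE : ∀ a b : Fin m, Continuous fun X : Matrix (Fin m) (Fin m) ℝ => X a b := by
    intro a b; fun_prop
  have hc2 : ∀ a b c d : Fin m,
      Continuous fun X : Matrix (Fin m) (Fin m) ℝ => X a b * X c d := by
    intro a b c d; fun_prop
  have hcs : ∀ a b : Fin m, Continuous fun X : Matrix (Fin m) (Fin m) ℝ => X a b ^ 2 := by
    intro a b; fun_prop
  have hoff : ∀ i j a, j ≠ i → ∫ ω, G ω i a * G ω a j ∂μ = 0 := by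
    intro i j a hji
    have h := inv_sign hinv _ (hc2 i a a j) i
    have h2 : ∫ ω, G ω i a * G ω a j ∂μ = - ∫ ω, G ω i a * G ω a j ∂μ := by
      conv_lhs => rw [← h]
      rw [← integral_neg]
      congr 1; ext ω
      by_cases ha : a = i <;> simp [ha, hji]
    linarith
  have hp : ∀ j, ∫ ω, G ω j j ^ 2 ∂μ = ∫ ω, G ω i i ^ 2 ∂μ := by
    intro j
    have h := inv_perm hinv _ (hcs i i) (Equiv.swap i j)
    simpa using h
  have ht : ∀ j, ∫ ω, G ω j j ∂μ = ∫ ω, G ω i i ∂μ := by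
    intro j
    have h := inv_perm hinv _ (hcE i i) (Equiv.swap i j)
    simpa using h
  have htE : (m : ℝ) * ∫ ω, G ω i i ∂μ = k := by
    have h1 : ∫ ω, (G ω).trace ∂μ = k := by
      rw [integral_congr_ae htr]; simp
    rw [← h1]
    simp only [Matrix.trace, Matrix.diag]
    rw [integral_finsetSum _ (fun j _ => hint _ (hcE j j)), Finset.sum_congr rfl (fun j _ => ht j)]
    simp
  have hq : ∀ j j', j ≠ i → j' ≠ i → ∫ ω, G ω i j ^ 2 ∂μ = ∫ ω, G ω i j' ^ 2 ∂μ := by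
    intro j j' hj hj'
    have h := inv_perm hinv _ (hcs i j') (Equiv.swap j j')
    simpa [Equiv.swap_apply_of_ne_of_ne hj.symm hj'.symm] using h
  have hrot : ∀ j, j ≠ i → ∫ ω, G ω i i * G ω j j ∂μ =
      ∫ ω, G ω i i ^ 2 ∂μ - 2 * ∫ ω, G ω i j ^ 2 ∂μ := by
    intro j hj
    obtain ⟨U, hU, hUX⟩ := rot i j hj.symm
    have h := hinv _ (hcs i j) U hU
    have e : ∀ ω, (U * G ω * Uᵀ) i j ^ 2 =
        144 / 625 * G ω j j ^ 2 + 144 / 625 * G ω i i ^ 2 + 49 / 625 * G ω i j ^ 2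
        + (-288 / 625) * (G ω i i * G ω j j) + 168 / 625 * (G ω i j * G ω j j)
        + (-168 / 625) * (G ω i i * G ω i j) := by
      intro ω
      rw [hUX, hs ω j i]; ring
    simp only [e] at h
    have I2 := fun a b c d => hint _ (hc2 a b c d)
    have Is := fun a b => hint _ (hcs a b)
    rw [integral_add (by fun_prop) (by fun_prop), integral_add (by fun_prop) (by fun_prop),
      integral_add (by fun_prop) (by fun_prop), integral_add (by fun_prop) (by fun_prop),
      integral_add (by fun_prop) (by fun_prop)] at h
    simp only [integral_const_mul] at h
    rw [hoff i j j hj, hoff i j i hj, hp j] at h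
    linarith
  have hcard : ((Finset.univ.erase i).card : ℝ) = m - 1 := by
    rw [Finset.card_erase_of_mem (Finset.mem_univ i)]
    simp [Nat.cast_sub (show 1 ≤ m by omega)]
  have hS : ∑ j ∈ Finset.univ.erase i, ∫ ω, G ω i j ^ 2 ∂μ = k / m - ∫ ω, G ω i i ^ 2 ∂μ := by
    have h1 : ∫ ω, ∑ j, G ω i j ^ 2 ∂μ = ∫ ω, G ω i i ∂μ := by
      apply integral_congr_ae
      filter_upwards [hid] with ω hω
      conv_rhs => rw [← hω, Matrix.mul_apply]
      exact Finset.sum_congr rfl fun j _ => by rw [hs ω j i]; ring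
    rw [integral_finsetSum _ (fun j _ => hint _ (hcs i j)),
      ← Finset.add_sum_erase _ _ (Finset.mem_univ i)] at h1
    have : ∫ ω, G ω i i ∂μ = k / m := by field_simp; linarith
    linarith
  have hR : ∑ j ∈ Finset.univ.erase i, ∫ ω, G ω i i * G ω j j ∂μ
      = k * (k / m) - ∫ ω, G ω i i ^ 2 ∂μ := by
    have h1 : ∫ ω, ∑ j, G ω i i * G ω j j ∂μ = k * ∫ ω, G ω i i ∂μ := by
      rw [← integral_const_mul]
      apply integral_congr_ae
      filter_upwards [htr] with ω hω
      simp only [← hω, Matrix.trace, Matrix.diag]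
      rw [← Finset.mul_sum, mul_comm]
    rw [integral_finsetSum _ (fun j _ => hint _ (hc2 i i j j)),
      ← Finset.add_sum_erase _ _ (Finset.mem_univ i)] at h1
    have : ∫ ω, G ω i i ∂μ = k / m := by field_simp; linarith
    rw [this] at h1
    simp only [← pow_two] at h1
    linarith
  rw [Finset.sum_congr rfl (fun j hj => hrot j (Finset.ne_of_mem_erase hj)),
    Finset.sum_sub_distrib, ← Finset.mul_sum, hS, Finset.sum_const, nsmul_eq_mul, hcard] at hR
  have hP : ∫ ω, G ω i i ^ 2 ∂μ = k * (k + 2) / (m * (m + 2)) := by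
    have h2 : (m + 2 : ℝ) * ∫ ω, G ω i i ^ 2 ∂μ = k * (k + 2) / m := by
      have : k * (k + 2) / m = k * (k / m) + 2 * (k / m) := by ring
      rw [this]; linarith
    have h3 : (m + 2 : ℝ) ≠ 0 := by positivity
    rw [eq_div_iff (by positivity)]
    rw [eq_div_iff hm0] at h2
    linarith
  refine ⟨hP, fun j hj => ?_, fun j a hj => hoff i j a hj⟩
  rw [Finset.sum_congr rfl (fun j' hj' => hq j' j (Finset.ne_of_mem_erase hj') hj),
    Finset.sum_const, nsmul_eq_mul, hcard, hP] at hS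
  rw [← hS]; field_simp

lemma expect_diag (hm : 2 ≤ m) (hinv : ConjInv μ G)
    (hint : ∀ F : Matrix (Fin m) (Fin m) ℝ → ℝ, Continuous F → Integrable (fun ω => F (G ω)) μ)
    (hsym : ∀ ω, (G ω)ᵀ = G ω) (hid : ∀ᵐ ω ∂μ, G ω * G ω = G ω)
    (htr : ∀ᵐ ω ∂μ, (G ω).trace = k) (d : Fin m → ℝ) (p q : ℝ)
    (hp : p = k * (k + 2) / (m * (m + 2))) (hq : q = (k / m - p) / (m - 1)) (i j : Fin m) :
    ∫ ω, (G ω * diagonal d * G ω) i j ∂μ = ((p - q) • diagonal d + (q * ∑ a, d a) • 1 :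
      Matrix (Fin m) (Fin m) ℝ) i j := by
  obtain ⟨h1, h2, h3⟩ := moments hm hinv hint hsym hid htr i
  rw [← hp] at h1 h2
  rw [← hq] at h2
  have hs : ∀ ω a b, G ω a b = G ω b a := fun ω a b => congrFun (congrFun (hsym ω) b) a
  have e : ∀ ω, (G ω * diagonal d * G ω) i j = ∑ a, d a * (G ω i a * G ω a j) := by
    intro ω
    rw [Matrix.mul_apply]
    exact Finset.sum_congr rfl fun a _ => by rw [Matrix.mul_diagonal]; ring
  simp only [e]
  rw [integral_finsetSum _ (fun a _ => (hint (fun X => X i a * X a j) (by fun_prop)).const_mul _)]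
  simp only [integral_const_mul]
  by_cases hij : j = i
  · subst hij
    have e2 : ∀ a, ∫ ω, G ω j a * G ω a j ∂μ = q + if a = j then p - q else 0 := by
      intro a
      have : ∀ ω, G ω j a * G ω a j = G ω j a ^ 2 := fun ω => by rw [hs ω a j]; ring
      simp only [this]
      split_ifs with h
      · subst h; rw [h1]; ring
      · rw [h2 a h]; ring
    simp only [e2, mul_add, Finset.sum_add_distrib, ← Finset.sum_mul]
    simp
    ring
  · simp [h3 j _ hij, Ne.symm hij]

lemma expect_symm (hm : 2 ≤ m) (hinv : ConjInv μ G)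
    (hint : ∀ F : Matrix (Fin m) (Fin m) ℝ → ℝ, Continuous F → Integrable (fun ω => F (G ω)) μ)
    (hsym : ∀ ω, (G ω)ᵀ = G ω) (hid : ∀ᵐ ω ∂μ, G ω * G ω = G ω)
    (htr : ∀ᵐ ω ∂μ, (G ω).trace = k) (A : Matrix (Fin m) (Fin m) ℝ) (hA : A.IsSymm) (p q : ℝ)
    (hp : p = k * (k + 2) / (m * (m + 2))) (hq : q = (k / m - p) / (m - 1)) (i j : Fin m) :
    ∫ ω, (G ω * A * G ω) i j ∂μ = ((p - q) • A + (q * A.trace) • 1 :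
      Matrix (Fin m) (Fin m) ℝ) i j := by
  obtain ⟨U, d, hU, hAU⟩ : ∃ (U : Matrix (Fin m) (Fin m) ℝ) (d : Fin m → ℝ), Uᵀ * U = 1 ∧
      A = U * diagonal d * Uᵀ := by
    have hH : A.IsHermitian := by
      rw [Matrix.IsHermitian, conjTranspose_eq_transpose_of_trivial]; exact hA
    refine ⟨hH.eigenvectorUnitary, hH.eigenvalues, ?_, ?_⟩
    · have := Unitary.coe_star_mul_self hH.eigenvectorUnitary
      simpa [Matrix.star_eq_conjTranspose, conjTranspose_eq_transpose_of_trivial] using this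
    · have := hH.spectral_theorem
      rw [Unitary.conjStarAlgAut_apply] at this
      simpa [Matrix.star_eq_conjTranspose, conjTranspose_eq_transpose_of_trivial, Function.comp_def] using this
  have hU2 : U * Uᵀ = 1 := mul_eq_one_comm.mp hU
  rw [← hinv (fun X => (X * A * X) i j) (by fun_prop) U hU]
  have e : ∀ ω, ((U * G ω * Uᵀ) * A * (U * G ω * Uᵀ)) i j
      = ∑ b, ∑ a, (U i a * U j b) * (G ω * diagonal d * G ω) a b := by
    intro ω
    have : (U * G ω * Uᵀ) * A * (U * G ω * Uᵀ) = U * (G ω * diagonal d * G ω) * Uᵀ := by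
      rw [hAU]
      calc _ = U * G ω * (Uᵀ * U) * diagonal d * (Uᵀ * U) * G ω * Uᵀ := by
            simp only [Matrix.mul_assoc]
        _ = _ := by rw [hU]; simp only [Matrix.mul_assoc, Matrix.one_mul]
    rw [this, Matrix.mul_apply]
    simp only [Matrix.mul_apply (M := U), Finset.sum_mul, Matrix.transpose_apply]
    exact Finset.sum_congr rfl fun b _ => Finset.sum_congr rfl fun a _ => by ring
  have hI : ∀ a b, Integrable (fun ω => (U i a * U j b) * (G ω * diagonal d * G ω) a b) μ :=
    fun a b => (hint (fun X => (X * diagonal d * X) a b) (by fun_prop)).const_mul _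
  simp only [e]
  rw [integral_finsetSum _ (fun b _ => integrable_finsetSum _ (fun a _ => hI a b))]
  simp only [integral_finsetSum _ (fun a _ => hI a _), integral_const_mul,
    expect_diag hm hinv hint hsym hid htr d p q hp hq]
  have ht : A.trace = ∑ a, d a := by
    rw [hAU, Matrix.trace_mul_comm, ← Matrix.mul_assoc, hU, Matrix.one_mul, Matrix.trace_diagonal]
  have e3 : ((p - q) • A + (q * A.trace) • 1 : Matrix (Fin m) (Fin m) ℝ)
      = U * ((p - q) • diagonal d + (q * ∑ a, d a) • 1) * Uᵀ := by
    rw [ht, Matrix.mul_add, Matrix.add_mul, Matrix.mul_smul, Matrix.smul_mul, ← hAU,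
      Matrix.mul_smul, Matrix.smul_mul, Matrix.mul_one, hU2]
  rw [e3, Matrix.mul_apply]
  simp only [Matrix.mul_apply (M := U), Finset.sum_mul, Matrix.transpose_apply]
  exact Finset.sum_congr rfl fun b _ => Finset.sum_congr rfl fun a _ => by ring

end helpers

lemma opNorm_smul {m : ℕ} (c : ℝ) (hc : 0 ≤ c) (A : Matrix (Fin m) (Fin m) ℝ) :
    opNorm (c • A) = c * opNorm A := by
  unfold opNorm
  rw [map_smul, norm_smul, Real.norm_of_nonneg hc]

/-- Projection onto the span of the first `k` columns. -/
def projK {m : ℕ} (k : ℕ) (hkm : k ≤ m) (Q : Fin m → Fin m → ℝ) : Matrix (Fin m) (Fin m) ℝ :=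
  (Matrix.of Q).submatrix id (Fin.castLE hkm) * ((Matrix.of Q).submatrix id (Fin.castLE hkm))ᵀ

lemma projK_cont {m : ℕ} (k : ℕ) (hkm : k ≤ m) : Continuous (projK k hkm) := by
  unfold projK
  have : Continuous fun Q : Fin m → Fin m → ℝ => (Matrix.of Q).submatrix id (Fin.castLE hkm) :=
    continuous_matrix fun i j => by
      simp only [Matrix.submatrix_apply, Matrix.of_apply]; fun_prop
  fun_prop

lemma isCompact_orth (m : ℕ) :
    IsCompact {Q : Fin m → Fin m → ℝ | (Matrix.of Q)ᵀ * (Matrix.of Q) = 1} := by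
  apply Metric.isCompact_of_isClosed_isBounded
  · have hc : Continuous fun Q : Fin m → Fin m → ℝ => (Matrix.of Q)ᵀ * (Matrix.of Q) := by
      have : Continuous fun Q : Fin m → Fin m → ℝ => Matrix.of Q := continuous_id
      fun_prop
    exact isClosed_eq hc continuous_const
  · rw [isBounded_iff_forall_norm_le]
    refine ⟨1, fun Q hQ => ?_⟩
    rw [pi_norm_le_iff_of_nonneg zero_le_one]
    intro i
    rw [pi_norm_le_iff_of_nonneg zero_le_one]
    intro j
    have h := congrFun (congrFun hQ j) j
    simp only [Matrix.mul_apply, Matrix.transpose_apply, Matrix.of_apply, Matrix.one_apply_eq] at h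
    have h2 : Q i j * Q i j ≤ 1 := by
      rw [← h]
      exact Finset.single_le_sum (f := fun i => Q i j * Q i j)
        (fun a _ => mul_self_nonneg _) (Finset.mem_univ i)
    rw [Real.norm_eq_abs]
    exact abs_le_one_iff_mul_self_le_one.mpr h2

/-- The haar-k Q-seminorm formula:
`‖E[Q Qᵀ A Q Qᵀ]‖ = (m/k)·‖(1−β)·A + β·(tr A/m)·I‖` for symmetric `A`, where `Q` is `√(m/k)`
times the first `k` columns of a Haar-distributed orthogonal matrix and
`β = m(m−k)/((m+2)(m−1))`. -/
theorem haar_k_Q_seminorm (m k : ℕ) (hm : 2 ≤ m) (hk : 1 ≤ k) (hkm : k ≤ m)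
    (A : Matrix (Fin m) (Fin m) ℝ) (hA : A.IsSymm)
    (μ : Measure (Fin m → Fin m → ℝ)) [IsProbabilityMeasure μ]
    (hsupp : μ {Q | (Matrix.of Q)ᵀ * (Matrix.of Q) = 1} = 1)
    (hinv : ∀ U : Matrix (Fin m) (Fin m) ℝ, Uᵀ * U = 1 →
      Measure.map (fun Q => Matrix.of.symm (U * Matrix.of Q)) μ = μ) :
    opNorm (Matrix.of fun i j => ∫ Q,
        ((haarK k hkm Q) * (haarK k hkm Q)ᵀ * A * ((haarK k hkm Q) * (haarK k hkm Q)ᵀ)) i j ∂μ) =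
      ((m : ℝ) / k) *
        opNorm
          ((1 - ((m : ℝ) * ((m : ℝ) - (k : ℝ))) / (((m : ℝ) + 2) * ((m : ℝ) - 1))) • A +
            ((((m : ℝ) * ((m : ℝ) - (k : ℝ))) / (((m : ℝ) + 2) * ((m : ℝ) - 1))) *
              (Matrix.trace A / m)) • (1 : Matrix (Fin m) (Fin m) ℝ)) := by
  have hKm : MeasurableSet {Q : Fin m → Fin m → ℝ | (Matrix.of Q)ᵀ * (Matrix.of Q) = 1} :=
    (isCompact_orth m).measurableSet
  have hae : ∀ᵐ Q ∂μ, (Matrix.of Q)ᵀ * (Matrix.of Q) = 1 := by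
    rw [← prob_compl_eq_zero_iff hKm] at hsupp
    exact hsupp
  have hsub : ∀ Q : Fin m → Fin m → ℝ, (Matrix.of Q)ᵀ * (Matrix.of Q) = 1 →
      ((Matrix.of Q).submatrix id (Fin.castLE hkm))ᵀ * (Matrix.of Q).submatrix id (Fin.castLE hkm)
        = 1 := by
    intro Q hQ
    ext a b
    have h := congrFun (congrFun hQ (Fin.castLE hkm a)) (Fin.castLE hkm b)
    simp only [Matrix.mul_apply, Matrix.transpose_apply, Matrix.of_apply, Matrix.one_apply,
      Matrix.submatrix_apply, id, Fin.castLE_inj] at h ⊢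
    exact h
  have hint : ∀ F : Matrix (Fin m) (Fin m) ℝ → ℝ, Continuous F →
      Integrable (fun Q => F (projK k hkm Q)) μ := by
    intro F hF
    have h := (hF.comp (projK_cont k hkm)).continuousOn.integrableOn_compact
      (μ := μ) (isCompact_orth m)
    rw [IntegrableOn, Measure.restrict_eq_self_of_ae_mem
      (s := {Q : Fin m → Fin m → ℝ | (Matrix.of Q)ᵀ * (Matrix.of Q) = 1}) hae] at h
    exact h
  have hsym : ∀ Q, (projK k hkm Q)ᵀ = projK k hkm Q := by
    intro Q; simp [projK, Matrix.transpose_mul]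
  have hid : ∀ᵐ Q ∂μ, projK k hkm Q * projK k hkm Q = projK k hkm Q := by
    filter_upwards [hae] with Q hQ
    unfold projK
    rw [Matrix.mul_assoc, ← Matrix.mul_assoc _ᵀ, hsub Q hQ, Matrix.one_mul]
  have htr : ∀ᵐ Q ∂μ, (projK k hkm Q).trace = (k : ℝ) := by
    filter_upwards [hae] with Q hQ
    unfold projK
    rw [Matrix.trace_mul_comm, hsub Q hQ]; simp
  have hconj : ConjInv μ (projK k hkm) := by
    intro F hF U hU
    have hcU : Continuous fun Q : Fin m → Fin m → ℝ => Matrix.of.symm (U * Matrix.of Q) := by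
      have : Continuous fun Q : Fin m → Fin m → ℝ => Matrix.of Q := continuous_id
      have h2 : Continuous fun Q : Fin m → Fin m → ℝ => U * Matrix.of Q := by fun_prop
      exact h2
    conv_rhs => rw [← hinv U hU]
    rw [integral_map (f := fun Q => F (projK k hkm Q)) hcU.measurable.aemeasurable
      (hF.comp (projK_cont k hkm)).aestronglyMeasurable]
    congr 1; ext Q
    congr 1
    have : (U * Matrix.of Q).submatrix id (Fin.castLE hkm)
        = U * (Matrix.of Q).submatrix id (Fin.castLE hkm) := by
      ext a b; simp [Matrix.mul_apply]
    simp only [projK, Equiv.apply_symm_apply, this, Matrix.transpose_mul, Matrix.mul_assoc]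
  have hk0 : (k : ℝ) ≠ 0 := by positivity
  have hm0 : (m : ℝ) ≠ 0 := by positivity
  have hm1 : (m : ℝ) - 1 ≠ 0 := by
    have : (2 : ℝ) ≤ m := by exact_mod_cast hm
    linarith
  have hm2 : (m : ℝ) + 2 ≠ 0 := by positivity
  have hmain := expect_symm hm hconj hint hsym hid htr A hA _ _ rfl rfl
  have hHH : ∀ Q, haarK k hkm Q * (haarK k hkm Q)ᵀ = ((m : ℝ) / k) • projK k hkm Q := by
    intro Q
    simp only [haarK, projK, Matrix.transpose_smul, Matrix.smul_mul, Matrix.mul_smul, smul_smul]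
    rw [Real.mul_self_sqrt (by positivity)]
  rw [← opNorm_smul _ (by positivity)]
  congr 1
  ext i j
  simp only [hHH, Matrix.smul_mul, Matrix.mul_smul, smul_smul, Matrix.of_apply]
  simp only [Matrix.smul_apply (_ * _), smul_eq_mul, integral_const_mul, hmain]
  simp only [Matrix.smul_apply, Matrix.add_apply, smul_eq_mul]
  field_simp
  ring
end

section
/- Let m ≥ 1, k ≥ 1, and let A be a real symmetric m×m matrix. Let Q be a random m×k matrix whose entries are independent centered normal random variables with standard deviation 1/√k. Then ‖E[Q Qᵀ A Q Qᵀ]‖ = (m/k)·‖ ((k+1)/m)·A + (tr A/m)·I ‖, where I is the m×m identity matrix and ‖·‖ denotes the operator norm. -/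
open Matrix MeasureTheory ProbabilityTheory

namespace NormK

lemma hasDerivAt_poly_exp (v t c0 c1 c2 c3 : ℝ) :
    HasDerivAt (fun t : ℝ => (c0 + c1 * t + c2 * t ^ 2 + c3 * t ^ 3) * Real.exp (v * t ^ 2 / 2))
      ((c1 + 2 * c2 * t + 3 * c3 * t ^ 2 + (c0 + c1 * t + c2 * t ^ 2 + c3 * t ^ 3) * (v * t))
        * Real.exp (v * t ^ 2 / 2)) t := by
  have hx := hasDerivAt_id t
  have h1 : HasDerivAt (fun t : ℝ => v * t ^ 2 / 2) (v * t) t := by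
    have := ((hasDerivAt_pow 2 t).const_mul v).div_const 2
    refine this.congr_deriv ?_
    push_cast; ring
  have h2 : HasDerivAt (fun t : ℝ => c0 + c1 * t + c2 * t ^ 2 + c3 * t ^ 3)
      (c1 + 2 * c2 * t + 3 * c3 * t ^ 2) t := by
    have := (((hasDerivAt_id t).const_mul c1).const_add c0).add
      ((hasDerivAt_pow 2 t).const_mul c2) |>.add ((hasDerivAt_pow 3 t).const_mul c3)
    refine this.congr_deriv ?_
    push_cast; ring
  have := h2.mul h1.exp
  refine this.congr_deriv ?_
  ring

lemma deriv_poly_exp (v c0 c1 c2 c3 : ℝ) :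
    deriv (fun t : ℝ => (c0 + c1 * t + c2 * t ^ 2 + c3 * t ^ 3) * Real.exp (v * t ^ 2 / 2)) =
      fun t => ((c1 + 2 * c2 * t + 3 * c3 * t ^ 2 + (c0 + c1 * t + c2 * t ^ 2 + c3 * t ^ 3) *
        (v * t)) * Real.exp (v * t ^ 2 / 2)) :=
  funext fun t => (hasDerivAt_poly_exp v t c0 c1 c2 c3).deriv

lemma zero_mem (v : NNReal) : (0 : ℝ) ∈ interior (integrableExpSet id (gaussianReal 0 v)) := by
  simp [integrableExpSet_id_gaussianReal]

lemma integrable_pow_gauss (v : NNReal) (n : ℕ) :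
    Integrable (fun x : ℝ => x ^ n) (gaussianReal 0 v) := by
  simpa using integrable_pow_of_mem_interior_integrableExpSet (zero_mem v) n

lemma moment_eq (v : NNReal) (n : ℕ) : ∫ x, x ^ n ∂(gaussianReal 0 v) =
    iteratedDeriv n (fun t : ℝ => Real.exp (v * t ^ 2 / 2)) 0 := by
  have := iteratedDeriv_mgf_zero (zero_mem v) n
  rw [mgf_id_gaussianReal] at this
  simpa using this.symm

lemma id1 (v : ℝ) : deriv (fun t : ℝ => Real.exp (v * t ^ 2 / 2)) =
    fun t => (0 + v * t + 0 * t ^ 2 + 0 * t ^ 3) * Real.exp (v * t ^ 2 / 2) := by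
  have := deriv_poly_exp v 1 0 0 0
  simpa using this

lemma id2 (v : ℝ) : deriv^[2] (fun t : ℝ => Real.exp (v * t ^ 2 / 2)) =
    fun t => (v + 0 * t + v ^ 2 * t ^ 2 + 0 * t ^ 3) * Real.exp (v * t ^ 2 / 2) := by
  rw [Function.iterate_succ_apply', Function.iterate_one, id1, deriv_poly_exp]
  funext t; ring

lemma id3 (v : ℝ) : deriv^[3] (fun t : ℝ => Real.exp (v * t ^ 2 / 2)) =
    fun t => (0 + 3 * v ^ 2 * t + 0 * t ^ 2 + v ^ 3 * t ^ 3) * Real.exp (v * t ^ 2 / 2) := by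
  rw [Function.iterate_succ_apply', id2, deriv_poly_exp]
  funext t; ring

lemma id4 (v : ℝ) : deriv^[4] (fun t : ℝ => Real.exp (v * t ^ 2 / 2)) 0 = 3 * v ^ 2 := by
  rw [Function.iterate_succ_apply', id3, deriv_poly_exp]
  simp

/-- moments -/
noncomputable def mom (v : NNReal) (n : ℕ) : ℝ := ∫ x, x ^ n ∂(gaussianReal 0 v)

lemma mom0 (v : NNReal) : mom v 0 = 1 := by simp [mom]
lemma mom1 (v : NNReal) : mom v 1 = 0 := by
  rw [mom, moment_eq, iteratedDeriv_eq_iterate, Function.iterate_one, id1]; simp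
lemma mom2 (v : NNReal) : mom v 2 = v := by
  rw [mom, moment_eq, iteratedDeriv_eq_iterate, id2]; simp
lemma mom3 (v : NNReal) : mom v 3 = 0 := by
  rw [mom, moment_eq, iteratedDeriv_eq_iterate, id3]; simp
lemma mom4 (v : NNReal) : mom v 4 = 3 * (v : ℝ) ^ 2 := by
  rw [mom, moment_eq, iteratedDeriv_eq_iterate, id4]

/-- multiplicity count -/
def cnt {ι : Type*} [DecidableEq ι] (s t u w i : ι) : ℕ :=
  (if i = s then 1 else 0) + (if i = t then 1 else 0) + (if i = u then 1 else 0) +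
    (if i = w then 1 else 0)

lemma prod_cnt {ι : Type*} [DecidableEq ι] [Fintype ι] (x : ι → ℝ) (s t u w : ι) :
    ∏ i, x i ^ cnt s t u w i = x s * x t * x u * x w := by
  simp only [cnt, pow_add, Finset.prod_mul_distrib]
  simp [pow_ite]

/-- delta -/
noncomputable def dl {ι : Type*} [DecidableEq ι] (i j : ι) : ℝ := if i = j then 1 else 0

lemma prod_mom {ι : Type*} [DecidableEq ι] [Fintype ι] (v : NNReal) (s t u w : ι) :
    ∏ i, mom v (cnt s t u w i) =
      (v : ℝ) ^ 2 * (dl s t * dl u w + dl s u * dl t w + dl s w * dl t u) := by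
  have h : ∏ i, mom v (cnt s t u w i) = ∏ i ∈ ({s, t, u, w} : Finset ι), mom v (cnt s t u w i) := by
    symm
    apply Finset.prod_subset (Finset.subset_univ _)
    intro i _ hi
    simp only [Finset.mem_insert, Finset.mem_singleton, not_or] at hi
    simp [cnt, hi, mom0]
  rw [h]
  by_cases hst : s = t
  · subst hst
    by_cases hsu : s = u
    · subst hsu
      by_cases hsw : s = w
      · subst hsw
        simp [cnt, dl, mom1, mom2, mom3, mom4]
        try ring
      · simp [cnt, dl, mom1, mom2, mom3, mom4, hsw, Ne.symm hsw]
        try ring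
    · by_cases hsw : s = w
      · subst hsw
        simp [cnt, dl, mom1, mom2, mom3, mom4, hsu, Ne.symm hsu]
        try ring
      · by_cases huw : u = w
        · subst huw
          simp [cnt, dl, mom1, mom2, mom3, mom4, hsu, Ne.symm hsu, hsw, Ne.symm hsw]
          try ring
        · simp [cnt, dl, mom1, mom2, mom3, mom4, hsu, Ne.symm hsu, hsw, Ne.symm hsw, huw, Ne.symm huw]
          try ring
  · by_cases hsu : s = u
    · subst hsu
      by_cases hsw : s = w
      · subst hsw
        simp [cnt, dl, mom1, mom2, mom3, mom4, hst, Ne.symm hst]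
        try ring
      · by_cases htw : t = w
        · subst htw
          simp [cnt, dl, mom1, mom2, mom3, mom4, hst, Ne.symm hst, hsw, Ne.symm hsw]
          try ring
        · simp [cnt, dl, mom1, mom2, mom3, mom4, hst, Ne.symm hst, hsw, Ne.symm hsw, htw, Ne.symm htw]
          try ring
    · by_cases htu : t = u
      · subst htu
        by_cases hsw : s = w
        · subst hsw
          simp [cnt, dl, mom1, mom2, mom3, mom4, hst, Ne.symm hst, hsu, Ne.symm hsu]
          try ring
        · by_cases htw : t = w
          · subst htw
            simp [cnt, dl, mom1, mom2, mom3, mom4, hst, Ne.symm hst, hsu, Ne.symm hsu, hsw, Ne.symm hsw]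
            try ring
          · simp [cnt, dl, mom1, mom2, mom3, mom4, hst, Ne.symm hst, hsu, Ne.symm hsu, hsw, Ne.symm hsw, htw, Ne.symm htw]
            try ring
      · by_cases hsw : s = w
        · subst hsw
          simp [cnt, dl, mom1, mom2, mom3, mom4, hst, Ne.symm hst, hsu, Ne.symm hsu, htu, Ne.symm htu]
          try ring
        · by_cases htw : t = w
          · subst htw
            simp [cnt, dl, mom1, mom2, mom3, mom4, hst, Ne.symm hst, hsu, Ne.symm hsu, htu, Ne.symm htu, hsw, Ne.symm hsw]
            try ring
          · by_cases huw : u = w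
            · subst huw
              simp [cnt, dl, mom1, mom2, mom3, mom4, hst, Ne.symm hst, hsu, Ne.symm hsu, htu, Ne.symm htu, hsw, Ne.symm hsw, htw, Ne.symm htw]
              try ring
            · simp [cnt, dl, mom1, mom2, mom3, mom4, hst, Ne.symm hst, hsu, Ne.symm hsu, htu, Ne.symm htu, hsw, Ne.symm hsw, htw, Ne.symm htw, huw, Ne.symm huw]
              try ring

section
variable (m k : ℕ) (v : NNReal)

/-- The law of Q. -/
noncomputable abbrev law : Measure (Fin m → Fin k → ℝ) :=
  Measure.pi fun _ : Fin m => Measure.pi fun _ : Fin k => gaussianReal 0 v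

lemma eq_prod (Q : Fin m → Fin k → ℝ) (s t u w : Fin m × Fin k) :
    Q s.1 s.2 * Q t.1 t.2 * Q u.1 u.2 * Q w.1 w.2 =
      ∏ i, ∏ a, Q i a ^ cnt s t u w (i, a) := by
  rw [← prod_cnt (fun p : Fin m × Fin k => Q p.1 p.2), Fintype.prod_prod_type]

lemma integrable_four (s t u w : Fin m × Fin k) :
    Integrable (fun Q : Fin m → Fin k → ℝ => Q s.1 s.2 * Q t.1 t.2 * Q u.1 u.2 * Q w.1 w.2)
      (law m k v) := by
  simp_rw [eq_prod]
  refine Integrable.fintype_prod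
    (f := fun (i : Fin m) (x : Fin k → ℝ) => ∏ a, x a ^ cnt s t u w (i, a)) fun i => ?_
  exact Integrable.fintype_prod
    (f := fun (a : Fin k) (x : ℝ) => x ^ cnt s t u w (i, a)) fun a => integrable_pow_gauss v _

lemma integral_four (s t u w : Fin m × Fin k) :
    ∫ Q, Q s.1 s.2 * Q t.1 t.2 * Q u.1 u.2 * Q w.1 w.2 ∂(law m k v) =
      (v : ℝ) ^ 2 * (dl s t * dl u w + dl s u * dl t w + dl s w * dl t u) := by
  simp_rw [eq_prod]
  rw [← prod_mom, Fintype.prod_prod_type]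
  rw [integral_fintype_prod_eq_prod
    (fun (i : Fin m) (x : Fin k → ℝ) => ∏ a, x a ^ cnt s t u w (i, a))]
  refine Finset.prod_congr rfl fun i _ => ?_
  exact integral_fintype_prod_eq_prod (fun (a : Fin k) (x : ℝ) => x ^ cnt s t u w (i, a))

lemma entry (A : Matrix (Fin m) (Fin m) ℝ) (Q : Fin m → Fin k → ℝ) (i j : Fin m) :
    ((Matrix.of Q) * (Matrix.of Q)ᵀ * A * ((Matrix.of Q) * (Matrix.of Q)ᵀ)) i j =
      ∑ q, ∑ b, ∑ p, ∑ a, A p q * (Q i a * Q p a * Q q b * Q j b) := by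
  simp only [Matrix.mul_apply, Matrix.of_apply, Matrix.transpose_apply, Finset.mul_sum,
    Finset.sum_mul]
  refine Finset.sum_congr rfl fun q _ => Finset.sum_congr rfl fun b _ =>
    Finset.sum_congr rfl fun p _ => Finset.sum_congr rfl fun a _ => ?_
  ring

lemma dl_pair (i p : Fin m) (a b : Fin k) : dl (i, a) (p, b) = dl i p * dl a b := by
  simp only [dl, Prod.mk.injEq]
  by_cases h : i = p <;> by_cases h' : a = b <;> simp [h, h']

lemma expect (A : Matrix (Fin m) (Fin m) ℝ) (hA : A.IsSymm) (i j : Fin m) :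
    ∫ Q, ((Matrix.of Q) * (Matrix.of Q)ᵀ * A * ((Matrix.of Q) * (Matrix.of Q)ᵀ)) i j
      ∂(law m k v) = (v : ℝ) ^ 2 * ((k ^ 2 + k) * A i j + k * Matrix.trace A * dl i j) := by
  simp_rw [entry]
  have hInteg : ∀ q b p a, Integrable (fun Q : Fin m → Fin k → ℝ =>
      A p q * (Q i a * Q p a * Q q b * Q j b)) (law m k v) := fun q b p a =>
    (integrable_four m k v (i, a) (p, a) (q, b) (j, b)).const_mul _
  have hval : ∀ q b p a, ∫ Q, A p q * (Q i a * Q p a * Q q b * Q j b) ∂(law m k v) =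
      A p q * ((v : ℝ) ^ 2 * (dl i p * dl q j + dl i q * dl p j * dl a b
        + dl i j * dl p q * dl a b)) := by
    intro q b p a
    rw [integral_const_mul, integral_four m k v (i, a) (p, a) (q, b) (j, b)]
    simp only [dl_pair]
    by_cases h : a = b <;> simp [dl, h]
  rw [integral_finsetSum _ fun q _ => integrable_finsetSum _ fun b _ =>
    integrable_finsetSum _ fun p _ => integrable_finsetSum _ fun a _ => hInteg q b p a]
  have : ∀ q, ∫ Q, ∑ b, ∑ p, ∑ a, A p q * (Q i a * Q p a * Q q b * Q j b) ∂(law m k v) =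
      ∑ p, A p q * ((v : ℝ) ^ 2 * (k ^ 2 * (dl i p * dl q j) + k * (dl i q * dl p j)
        + k * (dl i j * dl p q))) := by
    intro q
    rw [integral_finsetSum _ fun b _ =>
      integrable_finsetSum _ fun p _ => integrable_finsetSum _ fun a _ => hInteg q b p a]
    simp_rw [integral_finsetSum _ fun p _ => integrable_finsetSum _ fun a _ => hInteg q _ p a]
    rw [Finset.sum_comm]
    refine Finset.sum_congr rfl fun p _ => ?_
    simp_rw [integral_finsetSum _ fun a _ => hInteg q _ p a, hval]
    have hs : ∑ b : Fin k, ∑ a : Fin k, dl a b = (k : ℝ) := by simp [dl]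
    simp_rw [← Finset.mul_sum, Finset.sum_add_distrib, ← Finset.mul_sum, hs]
    simp only [Finset.sum_const, Finset.card_univ, Fintype.card_fin, nsmul_eq_mul]
    ring
  simp_rw [this]
  have hs : A j i = A i j := hA.apply i j
  simp only [mul_add, Finset.sum_add_distrib]
  have e1 : ∑ q, ∑ p, A p q * ((v : ℝ) ^ 2 * (k ^ 2 * (dl i p * dl q j))) =
      v ^ 2 * k ^ 2 * A i j := by
    simp [dl]; ring
  have e2 : ∑ q, ∑ p, A p q * ((v : ℝ) ^ 2 * (k * (dl i q * dl p j))) =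
      v ^ 2 * k * A i j := by
    simp [dl, hs]; ring
  have e3 : ∑ q, ∑ p, A p q * ((v : ℝ) ^ 2 * (k * (dl i j * dl p q))) =
      v ^ 2 * k * Matrix.trace A * dl i j := by
    rw [Matrix.trace, Finset.mul_sum, Finset.sum_mul]
    refine Finset.sum_congr rfl fun q _ => ?_
    rw [Finset.sum_eq_single q]
    · simp [dl]; ring
    · intro b _ hb; simp [dl, hb]
    · simp
  rw [e1, e2, e3]
  ring

end

lemma opNorm_smul {m : ℕ} (c : ℝ) (hc : 0 ≤ c) (A : Matrix (Fin m) (Fin m) ℝ) :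
    opNorm (c • A) = c * opNorm A := by
  rw [opNorm, map_smul, norm_smul, Real.norm_of_nonneg hc, opNorm]

end NormK

/-- The norm-k Q-seminorm formula:
`‖E[Q Qᵀ A Q Qᵀ]‖ = (m/k)·‖((k+1)/m)·A + (tr A/m)·I‖` for symmetric `A`, where the entries of
the `m × k` matrix `Q` are i.i.d. centered Gaussians of variance `1/k`. -/
theorem norm_k_Q_seminorm (m k : ℕ) (hm : 1 ≤ m) (hk : 1 ≤ k)
    (A : Matrix (Fin m) (Fin m) ℝ) (hA : A.IsSymm) :
    opNorm (Matrix.of fun i j => ∫ Q,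
        ((Matrix.of Q) * (Matrix.of Q)ᵀ * A * ((Matrix.of Q) * (Matrix.of Q)ᵀ)) i j
          ∂(Measure.pi fun _ : Fin m => Measure.pi fun _ : Fin k =>
              gaussianReal 0 ((k : NNReal))⁻¹)) =
      ((m : ℝ) / k) *
        opNorm
          ((((k : ℝ) + 1) / m) • A +
            (Matrix.trace A / m) • (1 : Matrix (Fin m) (Fin m) ℝ)) := by
  rw [← NormK.opNorm_smul _ (by positivity)]
  congr 1
  ext i j
  have hk' : (k : ℝ) ≠ 0 := by positivity
  have hm' : (m : ℝ) ≠ 0 := by positivity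
  have := NormK.expect m k ((k : NNReal))⁻¹ A hA i j
  rw [Matrix.of_apply, this]
  simp only [Matrix.smul_apply, Matrix.add_apply, Matrix.one_apply, NormK.dl, smul_eq_mul,
    NNReal.coe_inv, NNReal.coe_natCast]
  field_simp
end

section
/- Let m ≥ 1, k ≥ 1, and g ∈ ℝᵐ. Let Q be a random m×k matrix whose entries are independent centered normal random variables with standard deviation 1/√k. Then E[‖g − Q Qᵀ g‖²] = ((m+1)/k)·‖g‖². In particular, the norm-k compressor is an ω-unbiased compressor with ω = (m+1)/k. -/
open Matrix MeasureTheory ProbabilityTheory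

lemma nk_deriv (v : ℝ) (p p' : ℝ → ℝ) (hp : ∀ t, HasDerivAt p (p' t) t) :
    deriv (fun t => p t * Real.exp (v * t ^ 2 / 2)) =
      fun t => (p' t + p t * (v * t)) * Real.exp (v * t ^ 2 / 2) := by
  ext t
  have h1 : HasDerivAt (fun t : ℝ => v * t ^ 2 / 2) (v * t) t := by
    have := ((hasDerivAt_pow 2 t).const_mul v).div_const 2
    convert! this using 1
    simp; ring
  have h2 : HasDerivAt (fun t => p t * Real.exp (v * t ^ 2 / 2)) _ t := (hp t).mul h1.exp
  rw [h2.deriv]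
  ring

lemma nk_moments (v : NNReal) :
    ∫ x, x ^ 3 ∂(gaussianReal 0 v) = 0 ∧ ∫ x, x ^ 4 ∂(gaussianReal 0 v) = 3 * (v : ℝ) ^ 2 := by
  have key : ∀ n, ∫ x, x ^ n ∂(gaussianReal 0 v)
      = iteratedDeriv n (fun t => (1:ℝ) * Real.exp ((v:ℝ) * t ^ 2 / 2)) 0 := by
    intro n
    have := iteratedDeriv_mgf_zero (X := fun x : ℝ => x) (μ := gaussianReal 0 v) (by simp) n
    simp only [Pi.pow_apply] at this
    rw [← this, mgf_fun_id_gaussianReal]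
    simp
  set w : ℝ := (v : ℝ)
  have d1 := nk_deriv w (fun _ => 1) (fun _ => 0) (fun t => hasDerivAt_const t 1)
  have d2 := nk_deriv w (fun t => w * t) (fun _ => w)
    (fun t => by simpa using (hasDerivAt_id t).const_mul w)
  have d3 := nk_deriv w (fun t => w + w ^ 2 * t ^ 2) (fun t => 2 * w ^ 2 * t)
    (fun t => by
      convert! ((hasDerivAt_pow 2 t).const_mul (w ^ 2)).const_add w using 1
      simp; ring)
  have d4 := nk_deriv w (fun t => 3 * w ^ 2 * t + w ^ 3 * t ^ 3) (fun t => 3 * w ^ 2 + 3 * w ^ 3 * t ^ 2)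
    (fun t => by
      convert! ((hasDerivAt_id t).const_mul (3 * w ^ 2)).add ((hasDerivAt_pow 3 t).const_mul (w ^ 3)) using 1
      simp; ring)
  have e3 : iteratedDeriv 3 (fun t => (1:ℝ) * Real.exp (w * t ^ 2 / 2)) =
      fun t => (3 * w ^ 2 * t + w ^ 3 * t ^ 3) * Real.exp (w * t ^ 2 / 2) := by
    rw [iteratedDeriv_succ, iteratedDeriv_succ, iteratedDeriv_one, d1]
    simp only [zero_add, one_mul]
    rw [d2]
    rw [show (fun t => (w + w * t * (w * t)) * Real.exp (w * t ^ 2 / 2)) =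
      (fun t => (w + w ^ 2 * t ^ 2) * Real.exp (w * t ^ 2 / 2)) by ext t; ring, d3]
    ext t; ring
  constructor
  · rw [key, e3]; simp
  · rw [key, iteratedDeriv_succ, e3, d4]; simp

lemma nk_column {Ω : Type*} [MeasurableSpace Ω] (P : Measure Ω) [IsProbabilityMeasure P]
    (m : ℕ) (v : NNReal) (X : Fin m → Ω → ℝ) (hX : ∀ l, Measurable (X l))
    (hind : iIndepFun X P) (hlaw : ∀ l, P.map (X l) = gaussianReal 0 v)
    (g : Fin m → ℝ) (i : Fin m) :
    MemLp (fun ω => X i ω * ∑ l, X l ω * g l) 2 P ∧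
    ∫ ω, X i ω * ∑ l, X l ω * g l ∂P = v * g i ∧
    Var[fun ω => X i ω * ∑ l, X l ω * g l; P] = (v : ℝ) ^ 2 * (g i ^ 2 + ∑ l, g l ^ 2) := by
  classical
  have : ENNReal.HolderTriple 4 4 2 := ⟨by
    rw [← two_mul, show (4 : ENNReal) = 2 * 2 by norm_num,
      ENNReal.mul_inv (by simp) (by simp), ← mul_assoc, ENNReal.mul_inv_cancel (by simp) (by simp),
      one_mul]⟩
  have hmem : ∀ l, MemLp (X l) 4 P := by
    intro l
    have := memLp_id_gaussianReal' (μ := 0) (v := v) 4 (by simp)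
    rw [← hlaw l] at this
    exact (memLp_map_measure_iff (by fun_prop) (hX l).aemeasurable).1 this
  have hmom : ∀ l n, ∫ ω, X l ω ^ n ∂P = ∫ x, x ^ n ∂(gaussianReal 0 v) := by
    intro l n
    rw [← hlaw l, integral_map (hX l).aemeasurable (by fun_prop)]
  have h1 : ∀ l, ∫ ω, X l ω ∂P = 0 := by
    intro l; have := hmom l 1; simpa using this
  have h2 : ∀ l, ∫ ω, X l ω ^ 2 ∂P = v := by
    intro l
    rw [hmom l 2, ← variance_of_integral_eq_zero (by fun_prop) (by simp)]
    simp
  have h3 : ∫ ω, X i ω ^ 3 ∂P = 0 := by rw [hmom, (nk_moments v).1]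
  have h4 : ∫ ω, X i ω ^ 4 ∂P = 3 * (v : ℝ) ^ 2 := by rw [hmom, (nk_moments v).2]
  have hvar : ∀ l, Var[X l; P] = v := by
    intro l
    rw [variance_of_integral_eq_zero (hX l).aemeasurable (h1 l), h2]
  set r : Ω → ℝ := fun ω => ∑ l ∈ Finset.univ.erase i, X l ω * g l with hr
  have hs : ∀ ω, ∑ l, X l ω * g l = X i ω * g i + r ω := by
    intro ω
    rw [hr, Finset.add_sum_erase _ (fun l => X l ω * g l) (Finset.mem_univ i)]
  have hrm : Measurable r := by fun_prop
  have hrL : MemLp r 4 P := memLp_finsetSum _ fun l _ => (hmem l).mul_const (g l)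
  have hindr : IndepFun (X i) r P := by
    have h := hind.indepFun_finset {i} (Finset.univ.erase i) (by simp) hX
    have hφ : Measurable (fun x : (({i} : Finset (Fin m)) → ℝ) => x ⟨i, by simp⟩) := by fun_prop
    have hψ : Measurable (fun x : (↥(Finset.univ.erase i : Finset (Fin m)) → ℝ) =>
      ∑ l : (Finset.univ.erase i : Finset (Fin m)), x l * g l) := by fun_prop
    have h' := h.comp hφ hψ
    have e : r = (fun x : (↥(Finset.univ.erase i : Finset (Fin m)) → ℝ) =>
      ∑ l : (Finset.univ.erase i : Finset (Fin m)), x l * g l) ∘ fun a l => X l a := by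
      ext ω
      exact (Finset.sum_coe_sort _ (fun l => X l ω * g l)).symm
    rw [e]
    exact h'
  have hr1 : ∫ ω, r ω ∂P = 0 := by
    rw [hr, integral_finsetSum]
    · simp [integral_mul_const, h1]
    · intro l _
      exact ((hmem l).integrable (by norm_num)).mul_const _
  have hr2 : ∫ ω, r ω ^ 2 ∂P = v * (∑ l, g l ^ 2 - g i ^ 2) := by
    rw [← variance_of_integral_eq_zero hrm.aemeasurable hr1]
    have : r = ∑ l ∈ Finset.univ.erase i, fun ω => X l ω * g l := by
      ext ω; simp [hr]
    rw [this, IndepFun.variance_sum]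
    · simp only [variance_mul_const, hvar]
      rw [← Finset.mul_sum, ← Finset.add_sum_erase _ (fun l => g l ^ 2) (Finset.mem_univ i)]
      ring
    · intro l _
      exact ((hmem l).mono_exponent (by norm_num)).mul_const _
    · intro l _ l' _ hll
      exact (hind.indepFun hll).comp (φ := fun x => x * g l) (ψ := fun x => x * g l')
        (by fun_prop) (by fun_prop)
  have hXX : MemLp (fun ω => X i ω * X i ω) 2 P := (hmem i).mul' (hmem i)
  have hXr : MemLp (fun ω => X i ω * r ω) 2 P := hrL.mul' (hmem i)
  have hYeq : (fun ω => X i ω * ∑ l, X l ω * g l)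
      = fun ω => g i * (X i ω * X i ω) + X i ω * r ω := by
    ext ω; rw [hs]; ring
  have hY : MemLp (fun ω => X i ω * ∑ l, X l ω * g l) 2 P := by
    rw [hYeq]; exact (hXX.const_mul _).add hXr
  have hindpow : ∀ a b : ℕ, ∫ ω, X i ω ^ a * r ω ^ b ∂P
      = (∫ ω, X i ω ^ a ∂P) * ∫ ω, r ω ^ b ∂P := fun a b =>
    hindr.integral_fun_comp_mul_comp (f := fun x => x ^ a) (g := fun x => x ^ b)
      (hX i).aemeasurable hrm.aemeasurable (by fun_prop) (by fun_prop)
  have hE : ∫ ω, X i ω * ∑ l, X l ω * g l ∂P = v * g i := by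
    rw [hYeq, integral_add ((hXX.integrable (by norm_num)).const_mul _) (hXr.integrable (by norm_num)),
      integral_const_mul]
    have := hindpow 1 1
    simp only [pow_one] at this
    rw [this, h1, zero_mul, add_zero]
    have := h2 i
    simp only [pow_two] at this
    rw [this]; ring
  refine ⟨hY, hE, ?_⟩
  rw [variance_eq_sub hY, hE]
  have i1 : Integrable (fun ω => X i ω ^ 4) P := by
    convert! hXX.integrable_mul hXX using 1
    ext ω; simp; ring
  have i2 : Integrable (fun ω => X i ω ^ 3 * r ω ^ 1) P := by
    convert! hXX.integrable_mul hXr using 1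
    ext ω; simp; ring
  have i3 : Integrable (fun ω => X i ω ^ 2 * r ω ^ 2) P := by
    convert! hXr.integrable_mul hXr using 1
    ext ω; simp; ring
  have : ∫ ω, ((fun ω => X i ω * ∑ l, X l ω * g l) ^ 2) ω ∂P =
      ∫ ω, (g i ^ 2 * X i ω ^ 4 + 2 * g i * (X i ω ^ 3 * r ω ^ 1)) + X i ω ^ 2 * r ω ^ 2 ∂P := by
    congr 1; ext ω
    simp only [Pi.pow_apply, hs]; ring
  have i12 : Integrable (fun ω => g i ^ 2 * X i ω ^ 4 + 2 * g i * (X i ω ^ 3 * r ω ^ 1)) P :=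
    (i1.const_mul _).add (i2.const_mul _)
  rw [this, integral_add i12 i3,
    integral_add (i1.const_mul _) (i2.const_mul _), integral_const_mul, integral_const_mul,
    hindpow, hindpow, h3, h4, h2, hr2]
  ring

theorem norm_k_omega_unbiased (m k : ℕ) (hm : 1 ≤ m) (hk : 1 ≤ k)
    (g : EuclideanSpace ℝ (Fin m)) :
    ∫ Q, ‖g - Matrix.toEuclideanLin ((Matrix.of Q) * (Matrix.of Q)ᵀ) g‖ ^ 2
        ∂(Measure.pi fun _ : Fin m => Measure.pi fun _ : Fin k =>
            gaussianReal 0 ((k : NNReal))⁻¹) =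
      (((m : ℝ) + 1) / k) * ‖g‖ ^ 2 := by
  classical
  have hk0 : (k : ℝ) ≠ 0 := by positivity
  set v : NNReal := ((k : NNReal))⁻¹ with hv
  have hvk : (v : ℝ) = (k : ℝ)⁻¹ := by simp [hv]
  set P : Measure (Fin m → Fin k → ℝ) := Measure.pi fun _ : Fin m => Measure.pi fun _ : Fin k =>
            gaussianReal 0 v with hP
  have hrow : ∀ i : Fin m, P.map (fun Q => Q i) = Measure.pi fun _ : Fin k => gaussianReal 0 v :=
    fun i => (measurePreserving_eval _ i).map_eq
  have hlaw : ∀ i j, P.map (fun Q => Q i j) = gaussianReal 0 v := by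
    intro i j
    have : (fun Q : Fin m → Fin k → ℝ => Q i j) = (fun q : Fin k → ℝ => q j) ∘ (fun Q => Q i) := rfl
    rw [this, ← Measure.map_map (by fun_prop) (by fun_prop), hrow]
    exact (measurePreserving_eval (fun _ : Fin k => gaussianReal 0 v) j).map_eq
  have hind : iIndepFun (fun (p : Fin m × Fin k) (Q : Fin m → Fin k → ℝ) => Q p.1 p.2) P := by
    have := iIndepFun_uncurry_infinitePi' (X := fun (_ : Fin m) (_ : Fin k) (x : ℝ) => x)
      (fun (_ : Fin m) (_ : Fin k) => gaussianReal 0 v) (by fun_prop)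
    simpa only [Measure.infinitePi_eq_pi] using this
  set Y : Fin m → Fin k → (Fin m → Fin k → ℝ) → ℝ :=
    fun i j Q => Q i j * ∑ l, Q l j * g l with hYdef
  have hcol : ∀ i j, MemLp (Y i j) 2 P ∧ ∫ Q, Y i j Q ∂P = v * g i ∧
      Var[Y i j; P] = (v : ℝ) ^ 2 * (g i ^ 2 + ∑ l, g l ^ 2) := by
    intro i j
    exact nk_column P m v (fun l Q => Q l j) (by fun_prop)
      (hind.precomp (g := fun l => (l, j)) (fun a b h => by simpa using h)) (fun l => hlaw l j) g i
  have hYind : ∀ i j j', j ≠ j' → IndepFun (Y i j) (Y i j') P := by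
    intro i j j' hjj
    have h := hind.indepFun_finset {p | p.2 = j} {p | p.2 = j'}
      (by
        rw [Finset.disjoint_left]
        intro p; simp only [Finset.mem_filter, Finset.mem_univ, true_and]
        intro h1 h2; exact hjj (h1.symm.trans h2)) (by fun_prop)
    have hφ : ∀ j : Fin k, Measurable
        (fun x : ((Finset.univ.filter fun p : Fin m × Fin k => p.2 = j) → ℝ) =>
          x ⟨(i, j), by simp⟩ * ∑ l, x ⟨(l, j), by simp⟩ * g l) := by
      intro j; fun_prop
    exact h.comp (hφ j) (hφ j')
  have hZL : ∀ i, MemLp (fun Q => ∑ j, Y i j Q) 2 P := fun i =>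
    memLp_finsetSum _ fun j _ => (hcol i j).1
  have hZE : ∀ i, ∫ Q, ∑ j, Y i j Q ∂P = g i := by
    intro i
    rw [integral_finsetSum _ fun j _ => (hcol i j).1.integrable (by norm_num)]
    simp only [(hcol i _).2.1, hvk]
    simp
    field_simp
  have hmain : ∀ i, ∫ Q, (g i - ∑ j, Y i j Q) ^ 2 ∂P = (g i ^ 2 + ∑ l, g l ^ 2) / k := by
    intro i
    have e : ∫ Q, (g i - ∑ j, Y i j Q) ^ 2 ∂P = Var[∑ j, Y i j; P] := by
      have : (∑ j, Y i j) = fun Q => ∑ j, Y i j Q := by ext Q; simp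
      rw [this, variance_eq_integral (hZL i).aemeasurable, hZE]
      congr 1; ext Q; ring
    rw [e, IndepFun.variance_sum (fun j _ => (hcol i j).1) (fun j _ j' _ h => hYind i j j' h)]
    simp only [(hcol i _).2.2, hvk]
    simp
    field_simp
  have hpt : ∀ Q : Fin m → Fin k → ℝ,
      ‖g - Matrix.toEuclideanLin ((Matrix.of Q) * (Matrix.of Q)ᵀ) g‖ ^ 2
        = ∑ i, (g i - ∑ j, Y i j Q) ^ 2 := by
    intro Q
    rw [EuclideanSpace.real_norm_sq_eq]
    refine Finset.sum_congr rfl fun i _ => ?_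
    congr 1
    simp only [PiLp.sub_apply, Matrix.toLpLin_apply, Matrix.mulVec, dotProduct, Matrix.mul_apply,
      Matrix.transpose_apply, Matrix.of_apply, hYdef, Finset.sum_mul, Finset.mul_sum]
    rw [Finset.sum_comm]
    simp only [mul_assoc]
  simp only [hpt]
  rw [integral_finsetSum]
  · simp only [hmain]
    rw [EuclideanSpace.real_norm_sq_eq, ← Finset.sum_div, Finset.sum_add_distrib]
    simp
    ring
  · intro i _
    exact ((memLp_const (g i)).sub (hZL i)).integrable_sq
end
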